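/- If F(c,z) is a QEF with power β > 0 for a model C(CZ) (satisfying the QEF inequality at every state of the model) and 0 < γ ≤ 1, then F(c,z)^γ is a QEF with power γβ for the same model. -/

import Mathlib

open scoped Matrix BigOperators Classical ComplexOrder

noncomputable section

/-- Real part of the trace of a complex matrix. -/
def rtr {d : ℕ} (M : Matrix (Fin d) (Fin d) ℂ) : ℝ := (Matrix.trace M).re

/-- Functional calculus applied to a matrix (junk value `0` if the matrix is not Hermitian). -/
def mfun {d : ℕ} (f : ℝ → ℝ) (A : Matrix (Fin d) (Fin d) ℂ) : Matrix (Fin d) (Fin d) ℂ :=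
  if h : A.IsHermitian then h.cfc f else 0

/-- Positive part `[A]₊` of a Hermitian matrix. -/
def posPartM {d : ℕ} (A : Matrix (Fin d) (Fin d) ℂ) : Matrix (Fin d) (Fin d) ℂ :=
  mfun (fun x => max x 0) A

/-- Projector onto the support of the positive part of a Hermitian matrix. -/
def posSuppProj {d : ℕ} (A : Matrix (Fin d) (Fin d) ℂ) : Matrix (Fin d) (Fin d) ℂ :=
  mfun (fun x => if 0 < x then 1 else 0) A

/-- Operator absolute value of a Hermitian matrix. -/
def absM {d : ℕ} (A : Matrix (Fin d) (Fin d) ℂ) : Matrix (Fin d) (Fin d) ℂ :=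
  mfun (fun x => |x|) A

/-- Moore–Penrose (relative) power of a Hermitian matrix: `x ↦ x ^ p` on the support,
`0` on the kernel. -/
def mpow {d : ℕ} (A : Matrix (Fin d) (Fin d) ℂ) (p : ℝ) : Matrix (Fin d) (Fin d) ℂ :=
  mfun (fun x => if x = 0 then 0 else x ^ p) A

/-- Support containment: the kernel of `σ` is contained in the kernel of `ρ`,
i.e. `supp ρ ⊆ supp σ` for positive semidefinite matrices. -/
def suppSubset {d : ℕ} (ρ σ : Matrix (Fin d) (Fin d) ℂ) : Prop :=
  ∀ v : Fin d → ℂ, σ.mulVec v = 0 → ρ.mulVec v = 0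

/-- Sandwiched Rényi power `R_α(ρ|σ) = tr((σ^{-β/(2α)} ρ σ^{-β/(2α)})^α)`, `β = α - 1`. -/
def sandR {d : ℕ} (α : ℝ) (ρ σ : Matrix (Fin d) (Fin d) ℂ) : ℝ :=
  rtr (mpow (mpow σ (-(α - 1) / (2 * α)) * ρ * mpow σ (-(α - 1) / (2 * α))) α)

/-- Petz Rényi power `tr(ρ^α σ^{-β})`, `β = α - 1`. -/
def petzR {d : ℕ} (α : ℝ) (ρ σ : Matrix (Fin d) (Fin d) ℂ) : ℝ :=
  rtr (mpow ρ α * mpow σ (-(α - 1)))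

/-!
Write `τ = Bᴴ B` and `X_α = B σ^{-(α-1)/α} Bᴴ`. The matrix whose `α`-th power is traced in
`R_α(τ|σ)` is isospectral to `X_α`, so `R_α(τ|σ) = tr X_α^α`, and `α` enters `X_α` only through an
exponent of `σ`. With `α = 1 + β`, `α' = 1 + γβ` and an orthonormal eigenbasis `v_j` of `X_α'`,
Hölder's inequality for the spectral measure of `σ` at `Bᴴ v_j` gives
`⟨v_j, X_α' v_j⟩ ^ α' ≤ (‖Bᴴ v_j‖²) ^ (1 - γ) * (⟨v_j, X_α v_j⟩ ^ α) ^ γ`.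
Summing over `j` with Hölder's inequality and bounding `∑ j, ⟨v_j, X_α v_j⟩ ^ α ≤ tr X_α^α`
(Peierls) yields `R_α'(τ|σ) ≤ (tr τ) ^ (1 - γ) * R_α(τ|σ) ^ γ`. A last application of Hölder's
inequality, over `(c, z)`, combines these bounds with the QEF inequality for `F`.
-/

section

open scoped InnerProductSpace

lemma sum_rpow_mul_rpow_le {ι : Type*} (s : Finset ι) {a b : ι → ℝ} (ha : ∀ i, 0 ≤ a i)
    (hb : ∀ i, 0 ≤ b i) {t : ℝ} (ht0 : 0 < t) (ht1 : t ≤ 1) :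
    ∑ i ∈ s, a i ^ (1 - t) * b i ^ t ≤ (∑ i ∈ s, a i) ^ (1 - t) * (∑ i ∈ s, b i) ^ t := by
  rcases ht1.eq_or_lt with rfl | ht1
  · simp
  have ht1' : 0 < 1 - t := sub_pos.2 ht1
  have hconj : (1 - t)⁻¹.HolderConjugate t⁻¹ :=
    Real.holderConjugate_iff.2 ⟨(one_lt_inv₀ ht1').2 (by linarith), by simp⟩
  have holder := Real.inner_le_Lp_mul_Lq_of_nonneg s hconj
    (fun i _ => Real.rpow_nonneg (ha i) (1 - t)) (fun i _ => Real.rpow_nonneg (hb i) t)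
  simpa [Real.rpow_rpow_inv, ha, hb, ht1'.ne', ht0.ne'] using holder

variable {d : ℕ}

lemma rtr_mul_comm (A B : Matrix (Fin d) (Fin d) ℂ) : rtr (A * B) = rtr (B * A) := by
  rw [rtr, Matrix.trace_mul_comm, rtr]

lemma rtr_sum {ι : Type*} (s : Finset ι) (A : ι → Matrix (Fin d) (Fin d) ℂ) :
    rtr (∑ i ∈ s, A i) = ∑ i ∈ s, rtr (A i) := by
  simp only [rtr, Matrix.trace_sum, Complex.re_sum]

lemma rtr_nonneg {A : Matrix (Fin d) (Fin d) ℂ} (hA : A.PosSemidef) : 0 ≤ rtr A :=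
  (Complex.le_def.1 hA.trace_nonneg).1

/-- The expectation value `⟨v, M v⟩` of `M` in the (not necessarily unit) vector `v`. Its real part
is taken so as to land in `ℝ`; nothing is lost when `M` is Hermitian. -/
def quadForm (M : Matrix (Fin d) (Fin d) ℂ) (v : EuclideanSpace ℂ (Fin d)) : ℝ :=
  (⟪v, M.toEuclideanLin v⟫_ℂ).re

lemma quadForm_nonneg {A : Matrix (Fin d) (Fin d) ℂ} (hA : A.PosSemidef)
    (v : EuclideanSpace ℂ (Fin d)) : 0 ≤ quadForm A v :=
  (Matrix.isPositive_toEuclideanLin_iff.2 hA).re_inner_nonneg_right v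

lemma quadForm_mul_mul_conjTranspose (B M : Matrix (Fin d) (Fin d) ℂ)
    (v : EuclideanSpace ℂ (Fin d)) :
    quadForm (B * M * Bᴴ) v = quadForm M (Bᴴ.toEuclideanLin v) := by
  rw [quadForm, quadForm, Matrix.toEuclideanLin_conjTranspose_eq_adjoint,
    LinearMap.adjoint_inner_left, ← Matrix.toEuclideanLin_conjTranspose_eq_adjoint]
  simp [Matrix.toLpLin_apply, Matrix.mulVec_mulVec, Matrix.mul_assoc]

lemma rtr_eq_sum_quadForm {ι : Type*} [Fintype ι] (M : Matrix (Fin d) (Fin d) ℂ)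
    (b : OrthonormalBasis ι ℂ (EuclideanSpace ℂ (Fin d))) :
    rtr M = ∑ j, quadForm M (b j) := by
  have htrace : M.trace = M.toEuclideanLin.trace ℂ (EuclideanSpace ℂ (Fin d)) :=
    (M.trace_toLin_eq (PiLp.basisFun 2 ℂ (Fin d))).symm
  simp only [rtr, quadForm, htrace, LinearMap.trace_eq_sum_inner _ b, Complex.re_sum]

lemma sum_norm_sq_toEuclideanLin {ι : Type*} [Fintype ι] (A : Matrix (Fin d) (Fin d) ℂ)
    (b : OrthonormalBasis ι ℂ (EuclideanSpace ℂ (Fin d))) :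
    ∑ j, ‖A.toEuclideanLin (b j)‖ ^ 2 = rtr (Aᴴ * A) := by
  rw [rtr_eq_sum_quadForm _ b]
  refine Finset.sum_congr rfl fun j _ => ?_
  calc ‖A.toEuclideanLin (b j)‖ ^ 2
      = quadForm 1 (A.toEuclideanLin (b j)) := by simp [quadForm, ← Complex.ofReal_pow]
    _ = quadForm (Aᴴ * A) (b j) := by simpa using (quadForm_mul_mul_conjTranspose Aᴴ 1 (b j)).symm

lemma toEuclideanLin_mfun_eigenvectorBasis {A : Matrix (Fin d) (Fin d) ℂ} (hA : A.IsHermitian)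
    (f : ℝ → ℝ) (i : Fin d) :
    (mfun f A).toEuclideanLin (hA.eigenvectorBasis i) =
      (f (hA.eigenvalues i) : ℂ) • hA.eigenvectorBasis i := by
  rw [mfun, dif_pos hA, Matrix.IsHermitian.cfc, Unitary.conjStarAlgAut_apply,
    Matrix.toLpLin_apply, ← Matrix.mulVec_mulVec, ← Matrix.mulVec_mulVec,
    hA.star_eigenvectorUnitary_mulVec, Matrix.diagonal_mulVec_single, ← smul_eq_mul,
    Pi.single_smul', Matrix.mulVec_smul, hA.eigenvectorUnitary_mulVec]
  rfl

lemma quadForm_mfun {A : Matrix (Fin d) (Fin d) ℂ} (hA : A.IsHermitian) (f : ℝ → ℝ)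
    (v : EuclideanSpace ℂ (Fin d)) :
    quadForm (mfun f A) v = ∑ i, ‖⟪hA.eigenvectorBasis i, v⟫_ℂ‖ ^ 2 * f (hA.eigenvalues i) := by
  nth_rw 1 [quadForm]
  nth_rw 2 [← hA.eigenvectorBasis.sum_repr' v]
  rw [map_sum, inner_sum, Complex.re_sum]
  refine Finset.sum_congr rfl fun i _ => ?_
  rw [map_smul, toEuclideanLin_mfun_eigenvectorBasis, inner_smul_right, inner_smul_right,
    ← inner_conj_symm v, mul_left_comm, Complex.mul_conj, Complex.normSq_eq_norm_sq,
    ← Complex.ofReal_mul, Complex.ofReal_re, mul_comm]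

lemma rtr_mfun {A : Matrix (Fin d) (Fin d) ℂ} (hA : A.IsHermitian) (f : ℝ → ℝ) :
    rtr (mfun f A) = ∑ i, f (hA.eigenvalues i) := by
  rw [rtr_eq_sum_quadForm _ hA.eigenvectorBasis]
  refine Finset.sum_congr rfl fun i _ => ?_
  rw [quadForm, toEuclideanLin_mfun_eigenvectorBasis]
  simp

lemma mfun_eq_cfc {A : Matrix (Fin d) (Fin d) ℂ} (hA : A.IsHermitian) (f : ℝ → ℝ) :
    mfun f A = cfc f A := by
  rw [mfun, dif_pos hA, hA.cfc_eq]

lemma isHermitian_mfun (f : ℝ → ℝ) (A : Matrix (Fin d) (Fin d) ℂ) : (mfun f A).IsHermitian := by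
  by_cases hA : A.IsHermitian
  · rw [mfun_eq_cfc hA]
    exact cfc_predicate f A
  · rw [mfun, dif_neg hA]
    exact Matrix.isHermitian_zero

lemma mfun_id {A : Matrix (Fin d) (Fin d) ℂ} (hA : A.IsHermitian) : mfun (fun x => x) A = A := by
  rw [mfun_eq_cfc hA]
  exact cfc_id' ℝ A hA

lemma rtr_mfun_conjTranspose_mul_self (f : ℝ → ℝ) (A : Matrix (Fin d) (Fin d) ℂ) :
    rtr (mfun f (Aᴴ * A)) = rtr (mfun f (A * Aᴴ)) := by
  rw [rtr_mfun (Matrix.isHermitian_conjTranspose_mul_self A),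
    rtr_mfun (Matrix.isHermitian_mul_conjTranspose_self A),
    (Matrix.IsHermitian.eigenvalues_eq_eigenvalues_iff _ _).2 (Matrix.charpoly_mul_comm Aᴴ A)]

lemma map_quadForm_le_quadForm_mfun {A : Matrix (Fin d) (Fin d) ℂ} (hA : A.IsHermitian)
    {s : Set ℝ} {f : ℝ → ℝ} (hf : ConvexOn ℝ s f) (hs : ∀ i, hA.eigenvalues i ∈ s)
    {v : EuclideanSpace ℂ (Fin d)} (hv : ‖v‖ = 1) :
    f (quadForm A v) ≤ quadForm (mfun f A) v := by
  have hmass : ∑ i, ‖⟪hA.eigenvectorBasis i, v⟫_ℂ‖ ^ 2 = 1 := by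
    rw [hA.eigenvectorBasis.sum_sq_norm_inner_right, hv, one_pow]
  nth_rw 1 [← mfun_id hA]
  rw [quadForm_mfun hA, quadForm_mfun hA]
  exact hf.map_sum_le (fun _ _ => sq_nonneg _) hmass fun i _ => hs i

lemma sum_map_quadForm_le_rtr_mfun {ι : Type*} [Fintype ι] {A : Matrix (Fin d) (Fin d) ℂ}
    (hA : A.IsHermitian) {s : Set ℝ} {f : ℝ → ℝ} (hf : ConvexOn ℝ s f)
    (hs : ∀ i, hA.eigenvalues i ∈ s) (b : OrthonormalBasis ι ℂ (EuclideanSpace ℂ (Fin d))) :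
    ∑ j, f (quadForm A (b j)) ≤ rtr (mfun f A) := by
  rw [rtr_eq_sum_quadForm _ b]
  exact Finset.sum_le_sum fun j _ => map_quadForm_le_quadForm_mfun hA hf hs (b.norm_eq_one j)

/-- The scalar function behind `mpow`: `x ↦ x ^ p` off zero and `0` at zero. Unlike `Real.rpow` it
satisfies the exponent laws at zero for all `p`. -/
def supportRpow (p x : ℝ) : ℝ := if x = 0 then 0 else x ^ p

lemma supportRpow_nonneg (p : ℝ) {x : ℝ} (hx : 0 ≤ x) : 0 ≤ supportRpow p x := by
  rw [supportRpow]
  split_ifs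
  exacts [le_rfl, Real.rpow_nonneg hx p]

lemma supportRpow_eq_rpow {p : ℝ} (hp : p ≠ 0) : supportRpow p = fun x => x ^ p := by
  ext x
  rw [supportRpow]
  split_ifs with hx
  · rw [hx, Real.zero_rpow hp]
  · rfl

lemma supportRpow_mul_supportRpow (p q : ℝ) {x : ℝ} (hx : 0 ≤ x) :
    supportRpow p x * supportRpow q x = supportRpow (p + q) x := by
  simp only [supportRpow]
  split_ifs with hx0
  · exact mul_zero 0
  · exact (Real.rpow_add (hx.lt_of_ne' hx0) p q).symm

lemma supportRpow_rpow (p : ℝ) {q x : ℝ} (hq : q ≠ 0) (hx : 0 ≤ x) :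
    supportRpow p x ^ q = supportRpow (p * q) x := by
  simp only [supportRpow]
  split_ifs
  · exact Real.zero_rpow hq
  · exact (Real.rpow_mul hx p q).symm

lemma mpow_eq_mfun (A : Matrix (Fin d) (Fin d) ℂ) (p : ℝ) : mpow A p = mfun (supportRpow p) A :=
  rfl

lemma mpow_mul_mpow {A : Matrix (Fin d) (Fin d) ℂ} (hA : A.PosSemidef) (p q : ℝ) :
    mpow A p * mpow A q = mpow A (p + q) := by
  have hcont (f : ℝ → ℝ) : ContinuousOn f (spectrum ℝ A) := A.finite_real_spectrum.continuousOn f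
  simp only [mpow_eq_mfun, mfun_eq_cfc hA.isHermitian]
  rw [← cfc_mul _ _ A (hcont _) (hcont _)]
  refine cfc_congr fun x hx => ?_
  rw [hA.isHermitian.spectrum_real_eq_range_eigenvalues] at hx
  obtain ⟨i, rfl⟩ := hx
  exact supportRpow_mul_supportRpow p q (hA.eigenvalues_nonneg i)

lemma posSemidef_mpow {A : Matrix (Fin d) (Fin d) ℂ} (hA : A.PosSemidef) (p : ℝ) :
    (mpow A p).PosSemidef := by
  have hsq : (mpow A (p / 2))ᴴ * mpow A (p / 2) = mpow A p := by
    rw [mpow_eq_mfun, (isHermitian_mfun _ A).eq, ← mpow_eq_mfun, mpow_mul_mpow hA, add_halves]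
  exact hsq ▸ Matrix.posSemidef_conjTranspose_mul_self _

lemma rtr_mpow_nonneg {A : Matrix (Fin d) (Fin d) ℂ} (hA : A.PosSemidef) (p : ℝ) :
    0 ≤ rtr (mpow A p) := by
  rw [mpow_eq_mfun, rtr_mfun hA.isHermitian]
  exact Finset.sum_nonneg fun i _ => supportRpow_nonneg p (hA.eigenvalues_nonneg i)

lemma quadForm_mpow_mul_le {A : Matrix (Fin d) (Fin d) ℂ} (hA : A.PosSemidef) (p : ℝ) {t : ℝ}
    (ht0 : 0 < t) (ht1 : t ≤ 1) (v : EuclideanSpace ℂ (Fin d)) :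
    quadForm (mpow A (p * t)) v ≤ (‖v‖ ^ 2) ^ (1 - t) * quadForm (mpow A p) v ^ t := by
  have hpow (i) : supportRpow (p * t) (hA.isHermitian.eigenvalues i) ^ t⁻¹ =
      supportRpow p (hA.isHermitian.eigenvalues i) := by
    rw [supportRpow_rpow _ (inv_ne_zero ht0.ne') (hA.eigenvalues_nonneg i),
      mul_inv_cancel_right₀ ht0.ne']
  have holder := Real.inner_le_weight_mul_Lp_of_nonneg Finset.univ ((one_le_inv₀ ht0).2 ht1)
    (fun i => ‖⟪hA.isHermitian.eigenvectorBasis i, v⟫_ℂ‖ ^ 2)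
    (fun i => supportRpow (p * t) (hA.isHermitian.eigenvalues i)) (fun _ => sq_nonneg _)
    fun i => supportRpow_nonneg _ (hA.eigenvalues_nonneg i)
  simp only [hpow, inv_inv, OrthonormalBasis.sum_sq_norm_inner_right] at holder
  rwa [mpow_eq_mfun, mpow_eq_mfun, quadForm_mfun hA.isHermitian, quadForm_mfun hA.isHermitian]

lemma rtr_mpow_eq_sum_quadForm_rpow {A : Matrix (Fin d) (Fin d) ℂ} (hA : A.IsHermitian) {p : ℝ}
    (hp : p ≠ 0) : rtr (mpow A p) = ∑ j, quadForm A (hA.eigenvectorBasis j) ^ p := by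
  have hquad (j) : quadForm A (hA.eigenvectorBasis j) = hA.eigenvalues j := by
    nth_rw 1 [← mfun_id hA]
    rw [quadForm, toEuclideanLin_mfun_eigenvectorBasis]
    simp
  simp only [mpow_eq_mfun, rtr_mfun hA, supportRpow_eq_rpow hp, hquad]

lemma sum_quadForm_rpow_le_rtr_mpow {ι : Type*} [Fintype ι] {A : Matrix (Fin d) (Fin d) ℂ}
    (hA : A.PosSemidef) {p : ℝ} (hp : 1 ≤ p)
    (b : OrthonormalBasis ι ℂ (EuclideanSpace ℂ (Fin d))) :
    ∑ j, quadForm A (b j) ^ p ≤ rtr (mpow A p) := by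
  rw [mpow_eq_mfun, supportRpow_eq_rpow (by positivity)]
  exact sum_map_quadForm_le_rtr_mfun hA.isHermitian (convexOn_rpow hp) hA.eigenvalues_nonneg b

lemma sandR_nonneg (α : ℝ) {τ : Matrix (Fin d) (Fin d) ℂ} (hτ : τ.PosSemidef)
    (σ : Matrix (Fin d) (Fin d) ℂ) : 0 ≤ sandR α τ σ := by
  rw [sandR]
  set S := mpow σ (-(α - 1) / (2 * α))
  have hS : Sᴴ = S := isHermitian_mfun _ σ
  refine rtr_mpow_nonneg ?_ α
  simpa only [hS] using hτ.conjTranspose_mul_mul_same S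

lemma sandR_conjTranspose_mul_self {α : ℝ} (hα : α ≠ 0) (B : Matrix (Fin d) (Fin d) ℂ)
    {σ : Matrix (Fin d) (Fin d) ℂ} (hσ : σ.PosSemidef) :
    sandR α (Bᴴ * B) σ = rtr (mpow (B * mpow σ (α⁻¹ - 1) * Bᴴ) α) := by
  rw [sandR]
  set S := mpow σ (-(α - 1) / (2 * α)) with hS_def
  have hS : Sᴴ = S := isHermitian_mfun _ σ
  have hSS : S * S = mpow σ (α⁻¹ - 1) := by
    rw [hS_def, mpow_mul_mpow hσ]
    congr 1
    field_simp
    ring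
  calc rtr (mpow (S * (Bᴴ * B) * S) α)
      = rtr (mpow ((B * S)ᴴ * (B * S)) α) := by
        rw [Matrix.conjTranspose_mul, hS]
        simp only [Matrix.mul_assoc]
    _ = rtr (mpow ((B * S) * (B * S)ᴴ) α) := rtr_mfun_conjTranspose_mul_self _ _
    _ = rtr (mpow (B * mpow σ (α⁻¹ - 1) * Bᴴ) α) := by
        rw [Matrix.conjTranspose_mul, hS, ← hSS]
        simp only [Matrix.mul_assoc]

lemma quadForm_mpow_inv_sub_one_rpow_le {σ : Matrix (Fin d) (Fin d) ℂ} (hσ : σ.PosSemidef)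
    {β γ : ℝ} (hβ : 0 ≤ β) (hγ0 : 0 < γ) (hγ1 : γ ≤ 1) (v : EuclideanSpace ℂ (Fin d)) :
    quadForm (mpow σ ((1 + γ * β)⁻¹ - 1)) v ^ (1 + γ * β) ≤
      (‖v‖ ^ 2) ^ (1 - γ) * (quadForm (mpow σ ((1 + β)⁻¹ - 1)) v ^ (1 + β)) ^ γ := by
  have hα' : 0 < 1 + γ * β := by positivity
  set t := γ * (1 + β) / (1 + γ * β) with ht
  have ht0 : 0 < t := by positivity
  have ht1 : t ≤ 1 := (div_le_one hα').2 (by linarith)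
  have hexp : (1 + γ * β)⁻¹ - 1 = ((1 + β)⁻¹ - 1) * t := by rw [ht]; field_simp; ring
  have htγ : t * (1 + γ * β) = (1 + β) * γ := by rw [ht, div_mul_cancel₀ _ hα'.ne', mul_comm]
  have htγ' : (1 - t) * (1 + γ * β) = 1 - γ := by rw [sub_mul, htγ]; ring
  have hq (p : ℝ) : 0 ≤ quadForm (mpow σ p) v := quadForm_nonneg (posSemidef_mpow hσ p) v
  calc quadForm (mpow σ ((1 + γ * β)⁻¹ - 1)) v ^ (1 + γ * β)
      ≤ ((‖v‖ ^ 2) ^ (1 - t) * quadForm (mpow σ ((1 + β)⁻¹ - 1)) v ^ t) ^ (1 + γ * β) :=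
        Real.rpow_le_rpow (hq _) (hexp ▸ quadForm_mpow_mul_le hσ _ ht0 ht1 v) hα'.le
    _ = (‖v‖ ^ 2) ^ (1 - γ) * (quadForm (mpow σ ((1 + β)⁻¹ - 1)) v ^ (1 + β)) ^ γ := by
        rw [Real.mul_rpow (by positivity) (Real.rpow_nonneg (hq _) t),
          ← Real.rpow_mul (sq_nonneg _), ← Real.rpow_mul (hq _), ← Real.rpow_mul (hq _), htγ, htγ']

open scoped MatrixOrder in
lemma exists_eq_conjTranspose_mul_self {A : Matrix (Fin d) (Fin d) ℂ} (hA : A.PosSemidef) :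
    ∃ B, A = Bᴴ * B :=
  CStarAlgebra.nonneg_iff_eq_star_mul_self.1 hA.nonneg

lemma sandR_one_add_mul_le {τ σ : Matrix (Fin d) (Fin d) ℂ} (hτ : τ.PosSemidef)
    (hσ : σ.PosSemidef) {β γ : ℝ} (hβ : 0 ≤ β) (hγ0 : 0 < γ) (hγ1 : γ ≤ 1) :
    sandR (1 + γ * β) τ σ ≤ rtr τ ^ (1 - γ) * sandR (1 + β) τ σ ^ γ := by
  obtain ⟨B, rfl⟩ := exists_eq_conjTranspose_mul_self hτ
  have hα : 1 + β ≠ 0 := by positivity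
  have hα' : 1 + γ * β ≠ 0 := by positivity
  set X : ℝ → Matrix (Fin d) (Fin d) ℂ := fun α => B * mpow σ (α⁻¹ - 1) * Bᴴ
  have hX (α) : (X α).PosSemidef := (posSemidef_mpow hσ _).mul_mul_conjTranspose_same B
  set v := (hX (1 + γ * β)).isHermitian.eigenvectorBasis
  set w : Fin d → ℝ := fun j => ‖Bᴴ.toEuclideanLin (v j)‖ ^ 2
  set x : Fin d → ℝ := fun j => quadForm (X (1 + β)) (v j) ^ (1 + β)
  have hw (j) : 0 ≤ w j := sq_nonneg _
  have hx (j) : 0 ≤ x j := Real.rpow_nonneg (quadForm_nonneg (hX _) _) _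
  have hsum_w : ∑ j, w j = rtr (Bᴴ * B) := by
    rw [sum_norm_sq_toEuclideanLin, Matrix.conjTranspose_conjTranspose, rtr_mul_comm]
  have peierls : ∑ j, x j ≤ sandR (1 + β) (Bᴴ * B) σ := by
    rw [sandR_conjTranspose_mul_self hα B hσ]
    exact sum_quadForm_rpow_le_rtr_mpow (hX _) (by linarith) v
  calc sandR (1 + γ * β) (Bᴴ * B) σ
      = ∑ j, quadForm (X (1 + γ * β)) (v j) ^ (1 + γ * β) := by
        rw [sandR_conjTranspose_mul_self hα' B hσ,
          rtr_mpow_eq_sum_quadForm_rpow (hX _).isHermitian hα']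
    _ ≤ ∑ j, w j ^ (1 - γ) * x j ^ γ := by
        simp only [x, X, quadForm_mul_mul_conjTranspose]
        exact Finset.sum_le_sum fun j _ => quadForm_mpow_inv_sub_one_rpow_le hσ hβ hγ0 hγ1 _
    _ ≤ (∑ j, w j) ^ (1 - γ) * (∑ j, x j) ^ γ := sum_rpow_mul_rpow_le _ hw hx hγ0 hγ1
    _ ≤ rtr (Bᴴ * B) ^ (1 - γ) * sandR (1 + β) (Bᴴ * B) σ ^ γ := by
        rw [hsum_w]
        exact mul_le_mul_of_nonneg_left
          (Real.rpow_le_rpow (Finset.sum_nonneg fun j _ => hx j) peierls hγ0.le)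
          (Real.rpow_nonneg (rtr_nonneg hτ) _)

theorem stmt12_general {ι : Type*} [Fintype ι] {τ σ : ι → Matrix (Fin d) (Fin d) ℂ}
    (hτ : ∀ i, (τ i).PosSemidef) (hσ : ∀ i, (σ i).PosSemidef)
    {β : ℝ} (hβ : 0 ≤ β) {F : ι → ℝ} (hF : ∀ i, 0 ≤ F i)
    (hqef : ∑ i, F i * sandR (1 + β) (τ i) (σ i) ≤ rtr (∑ i, τ i))
    {γ : ℝ} (hγ0 : 0 < γ) (hγ1 : γ ≤ 1) :
    ∑ i, F i ^ γ * sandR (1 + γ * β) (τ i) (σ i) ≤ rtr (∑ i, τ i) := by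
  rw [rtr_sum] at hqef ⊢
  have hR (i) : 0 ≤ sandR (1 + β) (τ i) (σ i) := sandR_nonneg _ (hτ i) _
  have hFR (i) : 0 ≤ F i * sandR (1 + β) (τ i) (σ i) := mul_nonneg (hF i) (hR i)
  have hT : 0 ≤ ∑ i, rtr (τ i) := Finset.sum_nonneg fun i _ => rtr_nonneg (hτ i)
  calc ∑ i, F i ^ γ * sandR (1 + γ * β) (τ i) (σ i)
      ≤ ∑ i, rtr (τ i) ^ (1 - γ) * (F i * sandR (1 + β) (τ i) (σ i)) ^ γ := by
        refine Finset.sum_le_sum fun i _ => ?_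
        rw [Real.mul_rpow (hF i) (hR i), mul_left_comm]
        exact mul_le_mul_of_nonneg_left (sandR_one_add_mul_le (hτ i) (hσ i) hβ hγ0 hγ1)
          (Real.rpow_nonneg (hF i) γ)
    _ ≤ (∑ i, rtr (τ i)) ^ (1 - γ) * (∑ i, F i * sandR (1 + β) (τ i) (σ i)) ^ γ :=
        sum_rpow_mul_rpow_le _ (fun i => rtr_nonneg (hτ i)) hFR hγ0 hγ1
    _ ≤ (∑ i, rtr (τ i)) ^ (1 - γ) * (∑ i, rtr (τ i)) ^ γ := by
        gcongr
        exact Finset.sum_nonneg fun i _ => hFR i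
    _ = ∑ i, rtr (τ i) := by
        rw [← Real.rpow_add_of_nonneg hT (sub_nonneg.2 hγ1) hγ0.le, sub_add_cancel, Real.rpow_one]

end

/-- Power reduction: if `F` is a QEF with power `β` for a model, then `F^γ` is a QEF
with power `γβ` for the same model, for any `0 < γ ≤ 1`. -/
theorem stmt12 {d : ℕ} {C Z : Type*} [Fintype C] [Fintype Z]
    (M : Set ((C × Z) → Matrix (Fin d) (Fin d) ℂ))
    (hM : ∀ ρ ∈ M, ∀ p, (ρ p).PosSemidef)
    (β : ℝ) (hβ : 0 < β)
    (F : C × Z → ℝ) (hF : ∀ p, 0 ≤ F p)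
    (hqef : ∀ ρ ∈ M,
      ∑ p, F p * sandR (1 + β) (ρ p) (∑ c, ρ (c, p.2)) ≤ rtr (∑ p, ρ p))
    (γ : ℝ) (hγ0 : 0 < γ) (hγ1 : γ ≤ 1) :
    ∀ ρ ∈ M,
      ∑ p, (F p) ^ γ * sandR (1 + γ * β) (ρ p) (∑ c, ρ (c, p.2)) ≤ rtr (∑ p, ρ p) := by
  intro ρ hρ
  exact stmt12_general (hM ρ hρ) (fun p => Matrix.posSemidef_sum _ fun c _ => hM ρ hρ (c, p.2))
    hβ.le hF (hqef ρ hρ) hγ0 hγ1
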